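/- arXiv:1505.03210 — 7 statements merged into one kernel-verified Lean document; each statement's English description precedes it below -/
import Mathlib

section
/- Every r-tree H is contained in a tight r-tree G with V(G) = V(H). Furthermore, a starting edge of H can be used as a starting edge of G (i.e., G has a tree-defining ordering whose first edge is the first edge of a given tree-defining ordering of H). -/
/-!
Add the edges of the given ordering one at a time to a growing tight tree `G` that spans exactly
the vertices seen so far. The next edge `A` meets these vertices only inside its parent `F`, which
is an edge of `G`. Walk from `F` to `A` by exchanging the vertices of `F \ A`, one by one, for those
of `A \ F`. Every set on the way has `r` vertices, differs from its predecessor in one new vertex,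
and lies in `F ∪ A`, so appending all of them keeps the tree tight and adds no vertex outside `A`.
-/

open Finset
open scoped Classical

noncomputable section

variable {α β : Type*}

/-- The vertex set of a hypergraph given by its finite edge set. -/
def hverts [DecidableEq α] (H : Finset (Finset α)) : Finset α := H.sup id

/-- `E 0, E 1, …, E (m-1)` is a tree-defining ordering: every edge after the first
has a parent among the earlier edges containing its intersection with the union of
all earlier edges. -/
def IsTreeOrder {m : ℕ} [DecidableEq α] (E : Fin m → Finset α) : Prop :=
  ∀ i : Fin m, 0 < i.1 → ∃ j : Fin m, j < i ∧ E i ∩ (Finset.Iio i).sup E ⊆ E j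

/-- A tight tree-defining ordering for an `r`-uniform hypergraph. -/
def IsTightTreeOrder {m : ℕ} [DecidableEq α] (r : ℕ) (E : Fin m → Finset α) : Prop :=
  ∀ i : Fin m, 0 < i.1 → ∃ j : Fin m, j < i ∧ E i ∩ (Finset.Iio i).sup E ⊆ E j ∧
    (E i ∩ E j).card = r - 1

/-- `H` is an `r`-tree: its edges admit a tree-defining ordering (with multiplicities
allowed in the ordering), and all edges have `r` vertices. -/
def IsRTree [DecidableEq α] (r : ℕ) (H : Finset (Finset α)) : Prop :=
  ∃ (m : ℕ) (E : Fin m → Finset α),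
    H = Finset.image E Finset.univ ∧ IsTreeOrder E ∧ ∀ i, (E i).card = r

/-- `H` is a tight `r`-tree. -/
def IsTightRTree [DecidableEq α] (r : ℕ) (H : Finset (Finset α)) : Prop :=
  ∃ (m : ℕ) (E : Fin m → Finset α),
    H = Finset.image E Finset.univ ∧ IsTightTreeOrder r E ∧ ∀ i, (E i).card = r

/-- The degree of a vertex: the number of edges containing it. -/
def hdeg [DecidableEq α] (H : Finset (Finset α)) (x : α) : ℕ :=
  (H.filter (fun E => x ∈ E)).card

/-- `H` is `k`-reducible: every edge contains at least `k` vertices of degree 1. -/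
def Reducible [DecidableEq α] (k : ℕ) (H : Finset (Finset α)) : Prop :=
  ∀ E ∈ H, k ≤ (E.filter (fun x => hdeg H x = 1)).card

/-- `S` is a cross-cut of `H`: it meets every edge in exactly one vertex. -/
def IsCrossCut [DecidableEq α] (H : Finset (Finset α)) (S : Finset α) : Prop :=
  ∀ E ∈ H, (E ∩ S).card = 1

/-- The cross-cut number: minimum size of a cross-cut. -/
def crossCutNum [DecidableEq α] (H : Finset (Finset α)) : ℕ :=
  sInf {k | ∃ S : Finset α, IsCrossCut H S ∧ S.card = k}

/-- `S` is a vertex cover of `H`. -/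
def IsVertexCover [DecidableEq α] (H : Finset (Finset α)) (S : Finset α) : Prop :=
  ∀ E ∈ H, (E ∩ S).Nonempty

/-- The vertex cover number: minimum size of a vertex cover. -/
def coverNum [DecidableEq α] (H : Finset (Finset α)) : ℕ :=
  sInf {k | ∃ S : Finset α, IsVertexCover H S ∧ S.card = k}

/-- `G` contains a copy of `H`, i.e. `H` is embeddable in `G`. -/
def ContainsCopy [DecidableEq α] [DecidableEq β] (G : Finset (Finset β))
    (H : Finset (Finset α)) : Prop :=
  ∃ f : α → β, Set.InjOn f ↑(H.sup id) ∧ ∀ E ∈ H, E.image f ∈ G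

/-- The Turán number `ex(n, H)`: the maximum size of an `r`-uniform family on `[n]`
containing no copy of `H`. -/
def exNum [DecidableEq α] (n r : ℕ) (H : Finset (Finset α)) : ℕ :=
  sSup {N | ∃ F : Finset (Finset (Fin n)), (∀ E ∈ F, E.card = r) ∧
    ¬ ContainsCopy F H ∧ F.card = N}

theorem image_univ_eq_insert_last [DecidableEq β] {n : ℕ} (f : Fin (n + 1) → β) :
    univ.image f = insert (f (Fin.last n)) (univ.image (Fin.init f)) := by
  rw [Fin.univ_castSuccEmb, cons_eq_insert, image_insert, map_eq_image, image_image]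
  rfl

section IioSup

variable [SemilatticeSup β] [OrderBot β] {n : ℕ} (f : Fin (n + 1) → β)

theorem sup_Iio_castSucc (i : Fin n) : (Iio i.castSucc).sup f = (Iio i).sup (Fin.init f) := by
  rw [← Fin.map_castSuccEmb_Iio, sup_map]
  rfl

theorem sup_Iio_last : (Iio (Fin.last n)).sup f = univ.sup (Fin.init f) := by
  rw [Fin.Iio_last_eq_map, sup_map]
  rfl

end IioSup

theorem card_insert_erase [DecidableEq α] {s : Finset α} {a b : α} (ha : a ∈ s) (hb : b ∉ s) :
    (insert b (s.erase a)).card = s.card := by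
  rw [card_insert_of_notMem (notMem_mono (erase_subset a s) hb), card_erase_add_one ha]

section TightTree

variable [DecidableEq α] {r n : ℕ} {A F S : Finset α} {G : Finset (Finset α)}

theorem hverts_insert (A : Finset α) (G : Finset (Finset α)) :
    hverts (insert A G) = A ∪ hverts G :=
  sup_insert

theorem hverts_image_univ (E : Fin n → Finset α) : hverts (univ.image E) = univ.sup E :=
  sup_image _ _ _

theorem subset_hverts (hF : F ∈ G) : F ⊆ hverts G :=
  le_sup (f := id) hF

theorem IsTreeOrder.init {E : Fin (n + 1) → Finset α} (hE : IsTreeOrder E) :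
    IsTreeOrder (Fin.init E) := by
  intro i hi
  obtain ⟨j, hji, hsub⟩ := hE i.castSucc hi
  rw [sup_Iio_castSucc] at hsub
  exact ⟨j.castLT (Fin.lt_def.1 hji |>.trans i.isLt), hji, hsub⟩

theorem IsTreeOrder.exists_parent_last {E : Fin (n + 1) → Finset α} (hE : IsTreeOrder E)
    (hn : 0 < n) : ∃ j : Fin n, E (Fin.last n) ∩ univ.sup (Fin.init E) ⊆ Fin.init E j := by
  obtain ⟨j, hj, hsub⟩ := hE (Fin.last n) hn
  rw [sup_Iio_last] at hsub
  exact ⟨j.castLT hj, hsub⟩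

theorem IsTightTreeOrder.snoc {E : Fin n → Finset α} (hE : IsTightTreeOrder r E) (j : Fin n)
    (hsub : A ∩ univ.sup E ⊆ E j) (hinter : (A ∩ E j).card = r - 1) :
    IsTightTreeOrder r (Fin.snoc E A : Fin (n + 1) → Finset α) := by
  intro i hi
  induction i using Fin.lastCases with
  | last =>
    refine ⟨j.castSucc, j.castSucc_lt_last, ?_⟩
    rw [sup_Iio_last, Fin.init_snoc, Fin.snoc_last, Fin.snoc_castSucc]
    exact ⟨hsub, hinter⟩
  | cast i =>
    obtain ⟨k, hki, hk⟩ := hE i hi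
    refine ⟨k.castSucc, hki, ?_⟩
    rwa [sup_Iio_castSucc, Fin.init_snoc, Fin.snoc_castSucc, Fin.snoc_castSucc]

/-- `G` is a tight `r`-tree that has `S` as a starting edge. -/
def IsTightRTreeFrom (r : ℕ) (S : Finset α) (G : Finset (Finset α)) : Prop :=
  ∃ (n : ℕ) (E : Fin (n + 1) → Finset α),
    IsTightTreeOrder r E ∧ (∀ i, (E i).card = r) ∧ E 0 = S ∧ univ.image E = G

namespace IsTightRTreeFrom

theorem singleton (hS : S.card = r) : IsTightRTreeFrom r S {S} :=
  ⟨0, fun _ ↦ S, fun i hi ↦ absurd hi (by omega), fun _ ↦ hS, rfl, by simp⟩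

theorem card_eq (hG : IsTightRTreeFrom r S G) (hF : F ∈ G) : F.card = r := by
  obtain ⟨n, E, -, hcard, -, rfl⟩ := hG
  obtain ⟨i, -, rfl⟩ := mem_image.1 hF
  exact hcard i

protected theorem insert (hG : IsTightRTreeFrom r S G) (hF : F ∈ G) (hA : A.card = r)
    (hsub : A ∩ hverts G ⊆ F) (hinter : (A ∩ F).card = r - 1) :
    IsTightRTreeFrom r S (insert A G) := by
  obtain ⟨n, E, hE, hcard, hS, rfl⟩ := hG
  obtain ⟨j, -, rfl⟩ := mem_image.1 hF
  rw [hverts_image_univ] at hsub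
  refine ⟨n + 1, Fin.snoc E A, hE.snoc j hsub hinter, ?_, ?_, ?_⟩
  · exact Fin.lastCases (by rwa [Fin.snoc_last]) fun i ↦ by rw [Fin.snoc_castSucc, hcard]
  · rw [← Fin.castSucc_zero, Fin.snoc_castSucc, hS]
  · rw [image_univ_eq_insert_last, Fin.snoc_last, Fin.init_snoc]

theorem insert_of_exchange (hG : IsTightRTreeFrom r S G) (hA : A.card = r) {a b : α}
    (haA : a ∈ A) (hbA : b ∉ A) (haG : a ∉ hverts G) (hF : insert b (A.erase a) ∈ G) :
    IsTightRTreeFrom r S (insert A G) := by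
  refine hG.insert hF hA (fun v hv ↦ ?_) ?_
  · obtain ⟨hvA, hvG⟩ := mem_inter.1 hv
    exact mem_insert_of_mem (mem_erase.2 ⟨ne_of_mem_of_not_mem hvG haG, hvA⟩)
  · rw [inter_insert_of_notMem hbA, inter_eq_right.2 (erase_subset a A), card_erase_of_mem haA, hA]

theorem exists_insert_subset (hG : IsTightRTreeFrom r S G) (hF : F ∈ G) (hA : A.card = r)
    (hsub : A ∩ hverts G ⊆ F) :
    ∃ G', IsTightRTreeFrom r S G' ∧ insert A G ⊆ G' ∧ hverts G' = hverts (insert A G) := by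
  induction hk : (A \ F).card generalizing A with
  | zero =>
    have hAF : A ⊆ F := sdiff_eq_empty_iff_subset.1 (card_eq_zero.1 hk)
    obtain rfl : A = F := eq_of_subset_of_card_le hAF (hG.card_eq hF ▸ hA.ge)
    exact ⟨G, hG, by rw [insert_eq_of_mem hF], by rw [insert_eq_of_mem hF]⟩
  | succ k ih =>
    have hcard : A.card = F.card := hA.trans (hG.card_eq hF).symm
    obtain ⟨a, ha⟩ : (A \ F).Nonempty := card_pos.1 (by omega)
    obtain ⟨b, hb⟩ : (F \ A).Nonempty := card_pos.1 (by rw [← card_sdiff_comm hcard]; omega)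
    obtain ⟨haA, haF⟩ := mem_sdiff.1 ha
    obtain ⟨hbF, hbA⟩ := mem_sdiff.1 hb
    have haG : a ∉ hverts G := fun h ↦ haF (hsub (mem_inter.2 ⟨haA, h⟩))
    have hbG : b ∈ hverts G := subset_hverts hF hbF
    -- the last set before `A` on the walk from `F` to `A`
    let A' := insert b (A.erase a)
    have hA' : A'.card = r := by rw [card_insert_erase haA hbA, hA]
    have hA'G : A' ∩ hverts G ⊆ F := by
      rw [insert_inter_of_mem hbG]
      exact insert_subset hbF ((inter_subset_inter_right (erase_subset a A)).trans hsub)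
    have hA'F : (A' \ F).card = k := by
      rw [insert_sdiff_of_mem _ hbF, erase_sdiff_comm, card_erase_of_mem ha, hk, Nat.add_sub_cancel]
    have hA'sub : A' ⊆ A ∪ hverts G :=
      insert_subset (mem_union_right _ hbG) ((erase_subset a A).trans subset_union_left)
    obtain ⟨G', hG', hGG', hverts_eq⟩ := ih hA' hA'G hA'F
    obtain ⟨hA'G', hGG'⟩ := insert_subset_iff.1 hGG'
    rw [hverts_insert] at hverts_eq
    have haG' : a ∉ hverts G' := by
      rw [hverts_eq, notMem_union, mem_insert, not_or]
      exact ⟨⟨ne_of_mem_of_not_mem haA hbA, notMem_erase a A⟩, haG⟩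
    refine ⟨insert A G', hG'.insert_of_exchange hA haA hbA haG' hA'G',
      insert_subset_insert A hGG', ?_⟩
    rw [hverts_insert, hverts_insert, hverts_eq, union_left_comm, union_eq_right.2 hA'sub]

end IsTightRTreeFrom

theorem IsTreeOrder.exists_isTightRTreeFrom {E : Fin (n + 1) → Finset α} (hE : IsTreeOrder E)
    (hcard : ∀ i, (E i).card = r) :
    ∃ G, IsTightRTreeFrom r (E 0) G ∧ univ.image E ⊆ G ∧ hverts G = hverts (univ.image E) := by
  induction n with
  | zero => exact ⟨{E 0}, .singleton (hcard 0), by simp, by simp⟩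
  | succ n ih =>
    obtain ⟨G, hG, hEG, hverts_eq⟩ := ih hE.init fun i ↦ hcard i.castSucc
    obtain ⟨j, hj⟩ := hE.exists_parent_last n.succ_pos
    rw [← hverts_image_univ, ← hverts_eq] at hj
    obtain ⟨G', hG', hGG', hverts_eq'⟩ :=
      hG.exists_insert_subset (hEG (mem_image_of_mem _ (mem_univ j))) (hcard _) hj
    rw [image_univ_eq_insert_last]
    refine ⟨G', hG', (insert_subset_insert _ hEG).trans hGG', ?_⟩
    rw [hverts_eq', hverts_insert, hverts_insert, hverts_eq]

end TightTree

/-- Every `r`-tree is contained in a tight `r`-tree on the same vertex set, and a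
starting edge of the tree can be used as starting edge of the tight tree. -/
theorem rTree_subset_tight_rTree {α : Type*} [DecidableEq α]
    (r m : ℕ) (hm : 0 < m)
    (E : Fin m → Finset α) (hord : IsTreeOrder E) (hcard : ∀ i, (E i).card = r) :
    ∃ (m' : ℕ) (hm' : 0 < m') (E' : Fin m' → Finset α),
      IsTightTreeOrder r E' ∧ (∀ i, (E' i).card = r) ∧
      E' ⟨0, hm'⟩ = E ⟨0, hm⟩ ∧
      Finset.image E Finset.univ ⊆ Finset.image E' Finset.univ ∧
      (Finset.image E' Finset.univ).sup id = (Finset.image E Finset.univ).sup id := by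
  obtain ⟨n, rfl⟩ := Nat.exists_eq_add_one.2 hm
  obtain ⟨G, ⟨k, E', htight, hcard', hstart, rfl⟩, hsub, hverts_eq⟩ :=
    hord.exists_isTightRTreeFrom hcard
  exact ⟨k + 1, k.succ_pos, E', htight, hcard', hstart, hsub, hverts_eq⟩

end
end

section
/- Let H be an r-tree, where r ≥ 2, with starting edge E_1 (the first edge in a tree-defining ordering of H). Let F be an r-graph with δ_{r−1}(F) ≥ |V(H)| − r + 1. Then any injective mapping f: E_1 → V(F) with f(E_1) ∈ F can be extended to an embedding of H in F (an injection g: V(H) → V(F) extending f with g(E) ∈ F for every edge E of H). -/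
/-!
Embed the edges one at a time along the tree order. Suppose `g` embeds the earlier edges, with
union `U`, and let `C` be the next edge, `P` its parent and `S = g(C ∩ U)`. Then `g(P)` is an edge
of `F` containing `S`, and it suffices to find an edge `B ⊇ S` of `F` whose remaining vertices
avoid `g(U)`. Among all edges containing `S`, one that meets `g(U)` in the fewest vertices will do:
if it met `g(U)` in some `x ∉ S`, the set `D = B \ {x}` would have degree larger than
`|g(U) \ S| ≥ |g(U) \ D|`, and `x` could be exchanged for a vertex outside `g(U)`. The degree
hypothesis suffices because `|g(U) \ S| = |U \ C| ≤ |V(H)| - r`.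
-/

open Finset
open scoped Classical

noncomputable section

variable {α β : Type*}

section TreeEmbedding

open scoped FinsetFamily

lemma exists_eqOn_compl_bijOn (g : α → β) {s : Finset α} {t : Finset β} (hst : #s = #t) :
    ∃ g' : α → β, Set.EqOn g' g (↑s)ᶜ ∧ Set.BijOn g' s t := by
  let e : s ≃ t := equivOfCardEq hst
  let g' : α → β := Function.extend Subtype.val (fun x => (e x : β)) g
  have hg' (x : s) : g' x = e x := Subtype.val_injective.extend_apply _ _ x
  refine ⟨g', fun x hx => Function.extend_apply' _ _ _ ?_, fun x hx => ?_, fun x hx y hy hxy => ?_,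
    fun y hy => ?_⟩
  · rintro ⟨a, rfl⟩
    exact hx a.2
  · rw [hg' ⟨x, hx⟩]
    exact (e _).2
  · rw [hg' ⟨x, hx⟩, hg' ⟨y, hy⟩] at hxy
    exact congrArg Subtype.val (e.injective (Subtype.ext hxy))
  · exact ⟨e.symm ⟨y, hy⟩, (e.symm _).2, by rw [hg', e.apply_symm_apply]⟩

variable [DecidableEq α] [DecidableEq β] {F : Finset (Finset β)} {r : ℕ}

lemma exists_insert_mem_of_card_sdiff_lt {D W : Finset β}
    (hF : (F : Set (Finset β)).Sized r) (hD : D ∈ ∂ F) (hW : #(W \ D) < #{A ∈ F | D ⊆ A}) :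
    ∃ y ∉ W, insert y D ∈ F := by
  by_contra! hins
  obtain ⟨B, hB, -, hBD⟩ := mem_shadow_iff_exists_mem_card_add_one.1 hD
  have hsub : {A ∈ F | D ⊆ A} ⊆ (W \ D).image (insert · D) := by
    intro A hA
    obtain ⟨hAF, hDA⟩ := mem_filter.1 hA
    have hAD : #D + 1 = #A := by rw [hF hAF, ← hF hB, hBD]
    obtain ⟨y, hyD, rfl⟩ := exists_eq_insert_iff.2 ⟨hDA, hAD⟩
    have hyW : y ∈ W := by_contra fun hy => hins y hy hAF
    exact mem_image_of_mem _ (mem_sdiff.2 ⟨hyW, hyD⟩)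
  exact hW.not_ge ((card_le_card hsub).trans card_image_le)

lemma exists_edge_superset_disjoint_sdiff {S W A : Finset β}
    (hF : (F : Set (Finset β)).Sized r) (hdeg : ∀ D ∈ ∂ F, #(W \ S) < #{B ∈ F | D ⊆ B})
    (hA : A ∈ F) (hSA : S ⊆ A) :
    ∃ B ∈ F, S ⊆ B ∧ Disjoint (B \ S) W := by
  obtain ⟨B, hB, hmin⟩ := exists_min_image {B ∈ F | S ⊆ B} (fun B => #(B ∩ W))
    ⟨A, mem_filter.2 ⟨hA, hSA⟩⟩
  obtain ⟨hBF, hSB⟩ := mem_filter.1 hB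
  refine ⟨B, hBF, hSB, disjoint_left.2 fun x hxBS hxW => ?_⟩
  obtain ⟨hxB, hxS⟩ := mem_sdiff.1 hxBS
  have hSD : S ⊆ B.erase x := subset_erase.2 ⟨hSB, hxS⟩
  have hD : B.erase x ∈ ∂ F := erase_mem_shadow hBF hxB
  obtain ⟨y, hyW, hyF⟩ := exists_insert_mem_of_card_sdiff_lt hF hD
    ((card_le_card (sdiff_subset_sdiff Subset.rfl hSD)).trans_lt (hdeg _ hD))
  have hlt : #(insert y (B.erase x) ∩ W) < #(B ∩ W) := by
    rw [insert_inter_of_notMem hyW, erase_inter]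
    exact card_erase_lt_of_mem (mem_inter.2 ⟨hxB, hxW⟩)
  exact hlt.not_ge (hmin _ (mem_filter.2 ⟨hyF, hSD.trans (subset_insert _ _)⟩))

lemma exists_injOn_union_image_eq {g : α → β} {U C : Finset α} {B : Finset β}
    (hg : Set.InjOn g U) (hCB : #C = #B) (hSB : (C ∩ U).image g ⊆ B)
    (hdisj : Disjoint (B \ (C ∩ U).image g) (U.image g)) :
    ∃ g' : α → β, Set.EqOn g' g U ∧ Set.InjOn g' ↑(U ∪ C) ∧ C.image g' = B := by
  have hnew : #(C \ U) = #(B \ (C ∩ U).image g) := by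
    rw [card_sdiff_of_subset hSB, card_image_of_injOn (hg.mono (by simp)), ← hCB, card_sdiff,
      inter_comm]
  obtain ⟨g', hg'g, hbij⟩ := exists_eqOn_compl_bijOn g hnew
  have hU : Set.EqOn g' g U := hg'g.mono fun x hx hxC => (mem_sdiff.1 hxC).2 hx
  refine ⟨g', hU, ?_, ?_⟩
  · rw [← union_sdiff_self_eq_union, coe_union, Set.injOn_union (by exact_mod_cast disjoint_sdiff)]
    refine ⟨hg.congr hU.symm, hbij.injOn, fun x hx y hy hxy => ?_⟩
    exact disjoint_left.1 hdisj (hbij.mapsTo hy) (hxy ▸ hU hx ▸ mem_image_of_mem g hx)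
  · calc C.image g' = (C \ U).image g' ∪ (C ∩ U).image g' := by
          rw [← image_union, sdiff_union_inter]
      _ = B \ (C ∩ U).image g ∪ (C ∩ U).image g := by
          congr 1
          · exact_mod_cast hbij.image_eq
          · exact image_congr (hU.mono (by simp))
      _ = B := sdiff_union_of_subset hSB

/-- `g` embeds the subfamily of the hypergraph `E` indexed by `s` in the hypergraph `F`. The edges
are indexed because the embedding is built along an ordering of them. -/
def IsEmbeddingOn {ι : Type*} (E : ι → Finset α) (F : Finset (Finset β)) (s : Finset ι)
    (g : α → β) : Prop :=
  Set.InjOn g ↑(s.sup E) ∧ ∀ i ∈ s, (E i).image g ∈ F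

lemma IsEmbeddingOn.exists_insert {ι : Type*} [DecidableEq ι] {E : ι → Finset α} {s : Finset ι}
    {g : α → β} {i j : ι} (hg : IsEmbeddingOn E F s g) (hF : (F : Set (Finset β)).Sized r)
    (hi : #(E i) = r) (hj : j ∈ s) (hij : E i ∩ s.sup E ⊆ E j)
    (hdeg : ∀ D ∈ ∂ F, #(s.sup E \ E i) < #{A ∈ F | D ⊆ A}) :
    ∃ g' : α → β, Set.EqOn g' g ↑(s.sup E) ∧ IsEmbeddingOn E F (insert i s) g' := by
  obtain ⟨hinj, hmem⟩ := hg
  set U := s.sup E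
  have hcard : #(U.image g \ (E i ∩ U).image g) = #(U \ E i) := by
    rw [card_sdiff_of_subset (image_subset_image inter_subset_right), card_image_of_injOn hinj,
      card_image_of_injOn (hinj.mono (by simp)), card_sdiff]
  obtain ⟨B, hBF, hSB, hdisj⟩ := exists_edge_superset_disjoint_sdiff hF
    (fun D hD => hcard.trans_lt (hdeg D hD)) (hmem j hj) (image_subset_image hij)
  obtain ⟨g', hU, hinj', hB⟩ :=
    exists_injOn_union_image_eq hinj (hi.trans (hF hBF).symm) hSB hdisj
  refine ⟨g', hU, ?_, (forall_mem_insert _ _ _).2 ⟨hB ▸ hBF, fun k hk => ?_⟩⟩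
  · rwa [sup_insert, sup_comm]
  · rw [image_congr (hU.mono (coe_subset.2 (le_sup hk)))]
    exact hmem k hk

lemma IsTreeOrder.exists_isEmbeddingOn_Iic {m : ℕ} {E : Fin (m + 1) → Finset α}
    (hord : IsTreeOrder E) (hE : ∀ i, #(E i) = r) (hF : (F : Set (Finset β)).Sized r)
    (hdeg : ∀ D ∈ ∂ F, #(univ.sup E) - r < #{A ∈ F | D ⊆ A}) {f : α → β}
    (hf : Set.InjOn f (E 0)) (hfE : (E 0).image f ∈ F) (i : Fin (m + 1)) :
    ∃ g : α → β, Set.EqOn g f (E 0) ∧ IsEmbeddingOn E F (Iic i) g := by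
  induction i using Fin.induction with
  | zero =>
    have hzero : Iic (0 : Fin (m + 1)) = {0} := Iic_bot
    exact ⟨f, Set.eqOn_refl _ _, by simpa [IsEmbeddingOn, hzero] using ⟨hf, hfE⟩⟩
  | succ i ih =>
    obtain ⟨g, hgf, hg⟩ := ih
    have hIio : Iio i.succ = Iic i.castSucc := by
      ext j
      simp [Fin.lt_def, Fin.le_def]
    rw [← hIio] at hg
    obtain ⟨j, hj, hij⟩ := hord i.succ i.succ_pos
    have hcard : #((Iio i.succ).sup E \ E i.succ) ≤ #(univ.sup E) - r := by
      rw [← hE i.succ, ← card_sdiff_of_subset (le_sup (mem_univ i.succ))]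
      exact card_le_card (sdiff_subset_sdiff (sup_mono (subset_univ _)) Subset.rfl)
    obtain ⟨g', hg'g, hg'⟩ := hg.exists_insert hF (hE _) (mem_Iio.2 hj) hij
      fun D hD => hcard.trans_lt (hdeg D hD)
    have hzero : E 0 ⊆ (Iio i.succ).sup E := le_sup (mem_Iio.2 i.succ_pos)
    exact ⟨g', (hg'g.mono (coe_subset.2 hzero)).trans hgf, Iio_insert i.succ ▸ hg'⟩

end TreeEmbedding

/-- Tree embedding lemma: if `δ_{r-1}(F) ≥ |V(H)| - r + 1` then any placement of a
starting edge of the `r`-tree `H` onto an edge of `F` extends to an embedding of `H`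
into `F`. -/
theorem tree_embedding {α β : Type*} [DecidableEq α] [DecidableEq β]
    (r m : ℕ) (hr : 2 ≤ r) (hm : 0 < m)
    (E : Fin m → Finset α) (hord : IsTreeOrder E) (hcard : ∀ i, (E i).card = r)
    (F : Finset (Finset β)) (hF : ∀ A ∈ F, A.card = r)
    (hδ : ∀ D : Finset β, D.card = r - 1 → (∃ A ∈ F, D ⊆ A) →
      ((Finset.image E Finset.univ).sup id).card - r + 1 ≤
        (F.filter (fun A => D ⊆ A)).card)
    (f : α → β) (hf : Set.InjOn f ↑(E ⟨0, hm⟩)) (hfE : (E ⟨0, hm⟩).image f ∈ F) :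
    ∃ g : α → β, Set.InjOn g ↑((Finset.image E Finset.univ).sup id) ∧
      (∀ x ∈ E ⟨0, hm⟩, g x = f x) ∧ ∀ i : Fin m, (E i).image g ∈ F := by
  obtain ⟨m, rfl⟩ := Nat.exists_eq_add_one.2 hm
  have hV : (image E univ).sup id = univ.sup E := by rw [sup_image, Function.id_comp]
  rw [hV] at hδ ⊢
  have hsized : (F : Set (Finset β)).Sized r := fun A hA => hF A hA
  have hdeg : ∀ D ∈ F.shadow, #(univ.sup E) - r < #{A ∈ F | D ⊆ A} := fun D hD =>
    hδ D (hsized.shadow hD) (exists_subset_of_mem_shadow hD)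
  obtain ⟨g, hgf, hinj, hmem⟩ :=
    hord.exists_isEmbeddingOn_Iic hcard hsized hdeg hf hfE (Fin.last m)
  have hlast : Iic (Fin.last m) = univ := Iic_top
  rw [hlast] at hinj hmem
  exact ⟨g, hinj, hgf, fun i => hmem i (mem_univ i)⟩

end
end

section
/- Let r ≥ 2 and let G be an r-graph with s vertices, and let S be a set of vertices of G each having degree 1 in G. Let F be an r-graph. If there is an injection f from V(G) ∖ S into V(F) such that for every edge E of G the set f(E ∖ S) belongs to Ker_s(F) (i.e., has kernel degree at least s in F), then G is embeddable in F. -/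
/-!
The map `f` is extended greedily, one edge at a time. A vertex of `E ∩ S` lies in no other edge, so
it is still unplaced when `E` is reached, and the vertices of `E` already placed are mapped onto the
kernel `f(E ∖ S)`. By uniformity each petal of the star over this kernel is as large as the unplaced
part of `E`. Petals are nonempty, so some vertex of `E` is unplaced and fewer than `s = |V(G)|`
vertices of `F` are occupied; as the `s` petals are pairwise disjoint, one of them is free.
-/

open Finset
open scoped Classical

noncomputable section

variable {α β : Type*}

/-- `F` contains an `s`-star (sunflower with `s` petals) with kernel `D`, i.e. the kernel
degree of `D` in `F` is at least `s`. -/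
def HasKernelStar [DecidableEq β] (F : Finset (Finset β)) (D : Finset β) (s : ℕ) : Prop :=
  ∃ P : Finset (Finset β), P ⊆ F ∧ P.card = s ∧
    (∀ A ∈ P, D ⊆ A ∧ (A \ D).Nonempty) ∧
    ∀ A ∈ P, ∀ B ∈ P, A ≠ B → A ∩ B = D

section GreedyExtension

variable [DecidableEq α] [DecidableEq β] {r s : ℕ} {F : Finset (Finset β)}

theorem exists_eqOn_injOn_union_image_eq {g : α → β} {W T : Finset α} {B : Finset β}
    (hg : Set.InjOn g W) (hWT : Disjoint W T) (hcard : T.card = B.card)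
    (hB : Disjoint B (W.image g)) :
    ∃ g' : α → β, Set.EqOn g' g W ∧ Set.InjOn g' ↑(W ∪ T) ∧ T.image g' = B := by
  rcases T.eq_empty_or_nonempty with rfl | ⟨x, -⟩
  · exact ⟨g, fun _ _ => rfl, by simpa using hg,
      (card_eq_zero.mp (hcard.symm.trans card_empty)).symm⟩
  have : Nonempty β := ⟨g x⟩
  obtain ⟨e, he⟩ := T.finite_toSet.exists_bijOn_of_encard_eq (t := (B : Set β)) (by
    simpa only [Set.encard_coe_eq_coe_finsetCard, Nat.cast_inj] using hcard)
  have heT : Set.EqOn (T.piecewise e g) e T := fun x hx => T.piecewise_eq_of_mem e g hx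
  have hgW : Set.EqOn (T.piecewise e g) g W := fun x hx =>
    T.piecewise_eq_of_notMem e g (disjoint_left.mp hWT hx)
  refine ⟨T.piecewise e g, hgW, ?_, ?_⟩
  · rw [coe_union, Set.injOn_union (disjoint_coe.mpr hWT), hgW.injOn_iff, heT.injOn_iff]
    refine ⟨hg, he.injOn, fun x hx y hy => ?_⟩
    rw [hgW hx, heT hy]
    exact fun hxy => disjoint_left.mp hB (he.mapsTo hy) (hxy ▸ mem_image_of_mem g hx)
  · rw [← coe_inj, coe_image, heT.image_eq, he.image_eq]

theorem inter_union_sup_of_disjoint_sdiff {C E : Finset α} {H : Finset (Finset α)}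
    (h : ∀ B ∈ H, Disjoint (E \ C) (B \ C)) : E ∩ (C ∪ H.sup id) = E ∩ C := by
  refine subset_antisymm (fun x hx => ?_) (inter_subset_inter_left subset_union_left)
  simp only [mem_inter, mem_union, mem_sup, id] at hx ⊢
  obtain ⟨hxE, hxC | ⟨B, hB, hxB⟩⟩ := hx
  · exact ⟨hxE, hxC⟩
  · by_contra! hxC
    exact disjoint_left.mp (h B hB) (mem_sdiff.mpr ⟨hxE, hxC hxE⟩)
      (mem_sdiff.mpr ⟨hxB, hxC hxE⟩)

theorem pairwiseDisjoint_inter_of_hdeg_le_one {G : Finset (Finset α)} {S : Finset α}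
    (hS : ∀ x ∈ S, hdeg G x ≤ 1) : (G : Set (Finset α)).PairwiseDisjoint (· ∩ S) := by
  refine fun A hA B hB hAB => disjoint_left.mpr fun x hxA hxB => hAB ?_
  rw [mem_inter] at hxA hxB
  exact card_le_one.mp (hS x hxA.2) A (mem_filter.mpr ⟨hA, hxA.1⟩) B (mem_filter.mpr ⟨hB, hxB.1⟩)

namespace HasKernelStar

variable {D : Finset β}

theorem exists_ssubset_disjoint_sdiff (h : HasKernelStar F D s) {U : Finset β}
    (hU : U.card < s) : ∃ A ∈ F, D ⊂ A ∧ Disjoint (A \ D) U := by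
  obtain ⟨P, hPF, hPs, hPD, hPP⟩ := h
  suffices ∃ A ∈ P, Disjoint (A \ D) U by
    obtain ⟨A, hA, hAU⟩ := this
    exact ⟨A, hPF hA, ⟨(hPD A hA).1, sdiff_nonempty.mp (hPD A hA).2⟩, hAU⟩
  by_contra! hmeet
  -- Each petal meets `U`, and no element of `U` lies in two petals.
  refine (hPs ▸ hU).not_ge (card_le_card_of_forall_subsingleton (fun A x => x ∈ A \ D) ?_ ?_)
  · intro A hA
    obtain ⟨x, hxA, hxU⟩ := not_disjoint_iff.mp (hmeet A hA)
    exact ⟨x, hxU, hxA⟩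
  · rintro x - A ⟨hA, hxA⟩ B ⟨hB, hxB⟩
    rw [mem_sdiff] at hxA hxB
    by_contra hAB
    exact hxA.2 (hPP A hA B hB hAB ▸ mem_inter.mpr ⟨hxA.1, hxB.1⟩)

theorem card_kernel_lt (h : HasKernelStar F D s) (hs : 0 < s) (hF : ∀ A ∈ F, A.card = r) :
    D.card < r := by
  obtain ⟨A, hA, hDA, -⟩ := h.exists_ssubset_disjoint_sdiff (U := ∅) hs
  exact hF A hA ▸ card_lt_card hDA

theorem exists_eqOn_injOn_union_image_mem {W E : Finset α} {g : α → β}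
    (hker : HasKernelStar F ((E ∩ W).image g) s) (hr : 0 < r) (hF : ∀ A ∈ F, A.card = r)
    (hg : Set.InjOn g W) (hE : E.card = r) (hs : (W ∪ E).card ≤ s) :
    ∃ g' : α → β, Set.EqOn g' g W ∧ Set.InjOn g' ↑(W ∪ E) ∧ E.image g' ∈ F := by
  have hkernel : ((E ∩ W).image g).card = (E ∩ W).card :=
    card_image_of_injOn (hg.mono (coe_subset.mpr inter_subset_right))
  have hsplit : (E \ W).card + (E ∩ W).card = E.card := card_sdiff_add_card_inter E W
  have hunion : W.card + (E \ W).card = (W ∪ E).card := by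
    rw [← card_union_of_disjoint disjoint_sdiff, union_sdiff_self_eq_union]
  have hspos : 0 < s := (hE ▸ hr).trans_le ((card_le_card subset_union_right).trans hs)
  have hoccupied : (W.image g).card < s := by
    have hlt := hker.card_kernel_lt hspos hF
    have hle : (W.image g).card ≤ W.card := card_image_le
    omega
  obtain ⟨A, hA, hDA, hfree⟩ := hker.exists_ssubset_disjoint_sdiff hoccupied
  have hpetal : (E \ W).card = (A \ (E ∩ W).image g).card := by
    rw [card_sdiff_of_subset hDA.subset, hF A hA]
    omega
  obtain ⟨g', hg'g, hg', hg'A⟩ := exists_eqOn_injOn_union_image_eq hg disjoint_sdiff hpetal hfree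
  refine ⟨g', hg'g, union_sdiff_self_eq_union (s := W) (t := E) ▸ hg', ?_⟩
  have hEA : E.image g' = A := by
    rw [← sdiff_union_inter E W, image_union, hg'A,
      image_congr (hg'g.mono (coe_subset.mpr inter_subset_right)),
      sdiff_union_of_subset hDA.subset]
  exact hEA ▸ hA

end HasKernelStar

theorem exists_eqOn_injOn_image_mem_of_pairwiseDisjoint_sdiff (hr : 0 < r)
    (hF : ∀ A ∈ F, A.card = r) {C : Finset α} {f : α → β} (hf : Set.InjOn f C)
    {H : Finset (Finset α)} (hH : ∀ E ∈ H, E.card = r)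
    (hdisj : (H : Set (Finset α)).PairwiseDisjoint (· \ C)) (hs : (C ∪ H.sup id).card ≤ s)
    (hker : ∀ E ∈ H, HasKernelStar F ((E ∩ C).image f) s) :
    ∃ g : α → β, Set.EqOn g f C ∧ Set.InjOn g ↑(C ∪ H.sup id) ∧ ∀ E ∈ H, E.image g ∈ F := by
  induction H using Finset.induction_on with
  | empty => exact ⟨f, fun _ _ => rfl, by simpa using hf, by simp⟩
  | insert E H hEH ih =>
    have hsup : C ∪ (insert E H).sup id = (C ∪ H.sup id) ∪ E := by
      rw [sup_insert, id, sup_eq_union, union_comm E, union_assoc]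
    rw [hsup] at hs ⊢
    rw [coe_insert, Set.pairwiseDisjoint_insert_of_notMem (mem_coe.not.mpr hEH)] at hdisj
    rw [forall_mem_insert] at hH hker
    obtain ⟨g, hgf, hg, hgF⟩ :=
      ih hH.2 hdisj.1 ((card_le_card subset_union_left).trans hs) hker.2
    have hkernel : (E ∩ (C ∪ H.sup id)).image g = (E ∩ C).image f := by
      rw [inter_union_sup_of_disjoint_sdiff hdisj.2]
      exact image_congr (hgf.mono (coe_subset.mpr inter_subset_right))
    have hkerE : HasKernelStar F ((E ∩ (C ∪ H.sup id)).image g) s := hkernel ▸ hker.1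
    obtain ⟨g', hg'g, hg', hg'E⟩ :=
      hkerE.exists_eqOn_injOn_union_image_mem hr hF hg hH.1 hs
    refine ⟨g', (hg'g.mono (coe_subset.mpr subset_union_left)).trans hgf, hg', ?_⟩
    refine (forall_mem_insert ..).mpr ⟨hg'E, fun B hB => ?_⟩
    have hBW : B ⊆ C ∪ H.sup id := (le_sup (f := id) hB).trans subset_union_right
    rw [image_congr (hg'g.mono (coe_subset.mpr hBW))]
    exact hgF B hB

end GreedyExtension

/-- Embedding an expansion: if `G` has `s` vertices, `S` is a set of degree-1 vertices
of `G`, and an injection `f` of `V(G) ∖ S` into `V(F)` sends every reduced edge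
`E ∖ S` into `Ker_s(F)`, then `G` is embeddable in `F`. -/
theorem expansion_embedding {α β : Type*} [DecidableEq α] [DecidableEq β]
    (r s : ℕ) (hr : 2 ≤ r)
    (G : Finset (Finset α)) (hG : ∀ E ∈ G, E.card = r) (hs : (G.sup id).card = s)
    (S : Finset α) (hS : ∀ x ∈ S, hdeg G x = 1)
    (F : Finset (Finset β)) (hF : ∀ A ∈ F, A.card = r)
    (f : α → β) (hf : Set.InjOn f ↑(G.sup id \ S))
    (hker : ∀ E ∈ G, HasKernelStar F ((E \ S).image f) s) :
    ∃ g : α → β, Set.InjOn g ↑(G.sup id) ∧ ∀ E ∈ G, E.image g ∈ F := by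
  have hsub : ∀ E ∈ G, E ⊆ G.sup id := fun E hE => le_sup (f := id) hE
  have hcore : ∀ E ∈ G, E ∩ (G.sup id \ S) = E \ S := fun E hE => by
    rw [← inter_sdiff_assoc, inter_eq_left.mpr (hsub E hE)]
  have hdisj : (G : Set (Finset α)).PairwiseDisjoint (· \ (G.sup id \ S)) :=
    (pairwiseDisjoint_inter_of_hdeg_le_one fun x hx => (hS x hx).le).mono_on fun E hE => by
      simp only [sdiff_sdiff_right', sdiff_eq_empty_iff_subset.mpr (hsub E hE)]
      exact (empty_union _).subset
  have hunion : (G.sup id \ S) ∪ G.sup id = G.sup id := union_eq_right.mpr sdiff_subset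
  obtain ⟨g, -, hg, hgF⟩ := exists_eqOn_injOn_image_mem_of_pairwiseDisjoint_sdiff
    (zero_lt_two.trans_le hr) hF hf hG hdisj (hunion.symm ▸ hs.le)
    fun E hE => (hcore E hE).symm ▸ hker E hE
  exact ⟨g, hunion ▸ hg, hgF⟩

end
end

section
/- (Compression of trees) Let H be a hypergraph tree with tree-defining ordering E_1,…,E_m and parent function α. Fix i with 2 ≤ i ≤ m, and suppose x ∈ E_i ∖ E_{α(i)} and y ∈ E_{α(i)} ∖ E_i. For each j = 1,…,m define E'_j = (E_j ∖ {x}) ∪ {y} if x ∈ E_j, and E'_j = E_j otherwise. Then the list E'_1,…,E'_m is a tree-defining ordering of a hypergraph tree H' (with the same parent function α). -/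
/-!
A function `p` that sends every index but the first to an earlier one is a parent function exactly
when, for every vertex `v`, the indices of the edges containing `v` form a subtree of the rooted
tree in which `p i` is the parent of `i`. Compression from `x` to `y` leaves the subtrees of the
other vertices alone, empties that of `x`, and turns that of `y` into the union of the two. Since
`x ∈ E i ∖ E (p i)`, the subtree of `x` is rooted at `i`; since `y ∈ E (p i)`, the parent of that
root lies in the subtree of `y`, so the union is again a subtree.
-/

open Finset
open scoped Classical

noncomputable section

variable {α β : Type*}

section General

variable {ι : Type*}

/-- `p` is a parent function of the ordered family of edges `E`: the tree-defining condition, stated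
for possibly infinite edges indexed by an arbitrary order. The value of `p` at a minimal index,
which has no parent, is arbitrary. -/
def IsParentFunction [Preorder ι] (E : ι → Set α) (p : ι → ι) : Prop :=
  ∀ j, ¬IsMin j → p j < j ∧ E j ∩ ⋃ k < j, E k ⊆ E (p j)

/-- `S` is a subtree of the rooted tree with parent function `p`: it contains the parent of each of
its elements except its root, encoded as an element with no smaller element in `S`. The empty set
is allowed. -/
def IsSubtree [Preorder ι] (p : ι → ι) (S : Set ι) : Prop :=
  ∀ ⦃j⦄, j ∈ S → ∀ ⦃k⦄, k ∈ S → k < j → p j ∈ S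

/-- The compression of the edge `s` from `x` to `y`, in which the vertex `x`, if present, is
replaced by `y`. If `y` already belongs to `s`, then `x` is just removed. -/
def compressEdge (x y : α) (s : Set α) : Set α :=
  if x ∈ s then insert y (s \ {x}) else s

lemma mem_compressEdge_right {x y : α} {s : Set α} :
    y ∈ compressEdge x y s ↔ x ∈ s ∨ y ∈ s := by
  by_cases hx : x ∈ s <;> simp [compressEdge, hx]

lemma mem_compressEdge_of_ne {v x y : α} {s : Set α} (hv : v ≠ y) :
    v ∈ compressEdge x y s ↔ v ∈ s ∧ v ≠ x := by
  by_cases hx : x ∈ s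
  · simp [compressEdge, hx, hv]
  · simpa [compressEdge, hx] using fun hvs => ne_of_mem_of_not_mem hvs hx

lemma isParentFunction_iff_isSubtree [Preorder ι] {E : ι → Set α} {p : ι → ι} :
    IsParentFunction E p ↔ (∀ j, ¬IsMin j → p j < j) ∧ ∀ v, IsSubtree p {j | v ∈ E j} := by
  constructor
  · exact fun h => ⟨fun j hj => (h j hj).1, fun v j hvj k hvk hkj =>
      (h j hkj.not_isMin).2 ⟨hvj, Set.mem_biUnion hkj hvk⟩⟩
  · rintro ⟨hlt, hsub⟩ j hj
    refine ⟨hlt j hj, fun v ⟨hvj, hv⟩ => ?_⟩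
    obtain ⟨k, hkj, hvk⟩ := Set.mem_iUnion₂.1 hv
    exact hsub v hvj hvk hkj

namespace IsSubtree

lemma isLeast_of_parent_notMem [LinearOrder ι] {p : ι → ι} {S : Set ι} {i : ι}
    (hS : IsSubtree p S) (hi : i ∈ S) (hpi : p i ∉ S) : IsLeast S i :=
  ⟨hi, fun _ hk => not_lt.1 fun hki => hpi (hS hi hk hki)⟩

lemma union [PartialOrder ι] {p : ι → ι} {S T : Set ι} {i : ι} (hS : IsSubtree p S)
    (hT : IsSubtree p T) (hi : IsLeast S i) (hpi : p i ∈ T) (hlt : p i < i) :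
    IsSubtree p (S ∪ T) := by
  rintro j (hjS | hjT) k hk hkj
  · obtain rfl | hij := (hi.2 hjS).eq_or_lt
    · exact Or.inr hpi
    · exact Or.inl (hS hjS hi.1 hij)
  · obtain hkS | hkT := hk
    · exact Or.inr (hT hjT hpi (hlt.trans_le (hi.2 hkS) |>.trans hkj))
    · exact Or.inr (hT hjT hkT hkj)

end IsSubtree

theorem tree_compression_general [LinearOrder ι] {E : ι → Set α} {p : ι → ι}
    (hp : IsParentFunction E p) {i : ι} (hi : ¬IsMin i) {x y : α} (hx : x ∈ E i)
    (hx' : x ∉ E (p i)) (hy : y ∈ E (p i)) :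
    IsParentFunction (fun j => compressEdge x y (E j)) p := by
  rw [isParentFunction_iff_isSubtree] at hp ⊢
  obtain ⟨hlt, hsub⟩ := hp
  refine ⟨hlt, fun v => ?_⟩
  obtain rfl | hvy := eq_or_ne v y
  · have hleast : IsLeast {j | x ∈ E j} i := (hsub x).isLeast_of_parent_notMem hx hx'
    simpa only [mem_compressEdge_right, Set.ofPred_or] using
      (hsub x).union (hsub v) hleast hy (hlt i hi)
  · simp only [mem_compressEdge_of_ne hvy]
    exact fun j hj k hk hkj => ⟨hsub v hj.1 hk.1 hkj, hj.2⟩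

end General

lemma not_isMin_iff_pos {m : ℕ} {j : Fin m} : ¬IsMin j ↔ 0 < j.1 := by
  rw [not_isMin_iff]
  exact ⟨fun ⟨k, hkj⟩ => k.1.zero_le.trans_lt hkj, fun hj => ⟨⟨0, hj.trans j.2⟩, hj⟩⟩

lemma isParentFunction_coe_iff {m : ℕ} [DecidableEq α] {E : Fin m → Finset α}
    {p : Fin m → Fin m} :
    IsParentFunction (fun j => (E j : Set α)) p ↔
      ∀ j : Fin m, 0 < j.1 → p j < j ∧ E j ∩ (Iio j).sup E ⊆ E (p j) := by
  simp only [IsParentFunction, not_isMin_iff_pos, ← coe_subset, coe_inter, sup_eq_biUnion,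
    coe_biUnion, coe_Iio, Set.mem_Iio]

lemma coe_ite_insert_erase [DecidableEq α] (x y : α) (s : Finset α) :
    ((if x ∈ s then insert y (s.erase x) else s : Finset α) : Set α) = compressEdge x y s := by
  by_cases hx : x ∈ s <;> simp [compressEdge, hx]

/-- Compression of trees: replacing `x` by `y` (with `x ∈ E i ∖ E (a i)`,
`y ∈ E (a i) ∖ E i`) in every edge containing `x` again yields a tree-defining
ordering, with the same parent function. -/
theorem tree_compression {α : Type*} [DecidableEq α]
    (m : ℕ) (E : Fin m → Finset α) (a : Fin m → Fin m)
    (hpar : ∀ i : Fin m, 0 < i.1 → a i < i ∧ E i ∩ (Finset.Iio i).sup E ⊆ E (a i))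
    (i : Fin m) (hi : 0 < i.1)
    (x y : α) (hx : x ∈ E i) (hx' : x ∉ E (a i)) (hy : y ∈ E (a i)) (hy' : y ∉ E i)
    (E' : Fin m → Finset α)
    (hE' : ∀ j : Fin m, E' j = if x ∈ E j then insert y ((E j).erase x) else E j) :
    ∀ j : Fin m, 0 < j.1 → a j < j ∧ E' j ∩ (Finset.Iio j).sup E' ⊆ E' (a j) := by
  rw [← isParentFunction_coe_iff] at hpar ⊢
  simpa only [hE', coe_ite_insert_erase] using
    tree_compression_general hpar (not_isMin_iff_pos.2 hi) hx hx' hy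

end
end

section
/- (Smallest hosting tree) Let H be an r-graph embeddable in an r-tree T, and let V_1,…,V_r be a compatible r-partition of V(T). For each i = 1,…,r let X_i = V_i ∩ V(H). Then there exists an r-tree G containing H as a subgraph such that V(G) = V(H) and X_1,…,X_r is a compatible r-partition of G. -/
/-! Since every edge of `T` is a transversal of the color classes, an ordering of the edges amounts
to one sequence `i ↦ x i c` of vertices for each color `c`, and a map `p` gives parents for the
ordering exactly when, for every color separately, a vertex occurring at `i` and earlier also occurs
at `p i`. The vertices outside `V(H)` can therefore be removed color by color, keeping `p`: with `k`
the first index at which the vertex lies in `V(H)`, put `x k` at all indices up to `k`; after `k`,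
keep the vertices of `V(H)` and replace every other one by the new vertex at the parent index. -/

open Finset
open scoped Classical

noncomputable section

variable {α β : Type*}

section Sequence

variable {ι : Type*} [LinearOrder ι]

/-- The single-color form of the tree condition with parents `p`: a value of the sequence `x` that
occurs at `i` and at some earlier index also occurs at `p i`. -/
def IsInherited (p : ι → ι) (x : ι → α) : Prop :=
  ∀ ⦃i l⦄, l < i → x i = x l → x i = x (p i)

variable {p : ι → ι} {x : ι → α} {S : Set α} {k : ι}

/-- The sequence obtained from `x` by replacing values outside `S` with the new value at the parent
index. It is constant up to `k`, which is meant to be the first index with `x k ∈ S`: at an earlier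
index the parents provide no value in `S`. -/
def retract [WellFoundedLT ι] (p : ι → ι) (x : ι → α) (S : Set α) (k : ι)
    (hp : ∀ ⦃i l⦄, l < i → p i < i) (i : ι) : α :=
  if _ : k < i then
    if x i ∈ S then x i else retract p x S k hp (p i)
  else x k
termination_by wellFounded_lt.wrap i
decreasing_by exact hp ‹k < i›

variable [WellFoundedLT ι] (hp : ∀ ⦃i l⦄, l < i → p i < i)

lemma retract_of_le {i : ι} (hi : i ≤ k) : retract p x S k hp i = x k := by
  rw [retract, dif_neg hi.not_gt]

lemma retract_of_lt_of_mem {i : ι} (hi : k < i) (hx : x i ∈ S) : retract p x S k hp i = x i := by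
  rw [retract, dif_pos hi, if_pos hx]

lemma retract_of_lt_of_notMem {i : ι} (hi : k < i) (hx : x i ∉ S) :
    retract p x S k hp i = retract p x S k hp (p i) := by
  rw [retract, dif_pos hi, if_neg hx]

lemma retract_of_mem (hk : ∀ l < k, x l ∉ S) {i : ι} (hx : x i ∈ S) :
    retract p x S k hp i = x i := by
  rcases lt_trichotomy i k with hi | rfl | hi
  · exact absurd hx (hk i hi)
  · exact retract_of_le hp le_rfl
  · exact retract_of_lt_of_mem hp hi hx

lemma exists_retract_eq (hk : x k ∈ S) (i : ι) :
    ∃ l ≤ max i k, x l ∈ S ∧ retract p x S k hp i = x l := by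
  induction i using WellFoundedLT.induction with
  | _ i ih =>
  rcases le_or_gt i k with hi | hi
  · exact ⟨k, le_max_right i k, hk, retract_of_le hp hi⟩
  by_cases hx : x i ∈ S
  · exact ⟨i, le_max_left i k, hx, retract_of_lt_of_mem hp hi hx⟩
  · obtain ⟨l, hl, hlS, hleq⟩ := ih (p i) (hp hi)
    exact ⟨l, hl.trans (max_le_max_right k (hp hi).le), hlS,
      (retract_of_lt_of_notMem hp hi hx).trans hleq⟩

lemma isInherited_retract (hx : IsInherited p x) (hkS : x k ∈ S) (hk : ∀ l < k, x l ∉ S) :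
    IsInherited p (retract p x S k hp) := by
  intro i l hl heq
  rcases le_or_gt i k with hi | hi
  · rw [retract_of_le _ hi, retract_of_le _ ((hp hl).le.trans hi)]
  by_cases hiS : x i ∈ S
  · obtain ⟨l', hl', -, hleq⟩ := exists_retract_eq hp hkS l
    have hxi := retract_of_mem hp hk hiS
    have hpar : x i = x (p i) :=
      hx (hl'.trans_lt (max_lt hl hi)) (hxi.symm.trans (heq.trans hleq))
    rw [hxi, retract_of_mem _ hk (hpar ▸ hiS), hpar]
  · exact retract_of_lt_of_notMem _ hi hiS

include hp in
lemma IsInherited.exists_retraction (hx : IsInherited p x) (hS : ∃ i, x i ∈ S) :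
    ∃ y : ι → α, IsInherited p y ∧ (∀ i, y i ∈ S) ∧ ∀ i, x i ∈ S → y i = x i := by
  obtain ⟨k, hkS, hmin⟩ := wellFounded_lt.has_min {i | x i ∈ S} hS
  have hk : ∀ l < k, x l ∉ S := fun l hl hlS => hmin l hlS hl
  refine ⟨_, isInherited_retract hp hx hkS hk, fun i => ?_, fun i => retract_of_mem _ hk⟩
  obtain ⟨l, -, hlS, hl⟩ := exists_retract_eq hp hkS i
  exact hl ▸ hlS

end Sequence

section Transversal

lemma transversal_injective {C : Type*} {V : C → Finset α}
    (hV : Pairwise (Function.onFun Disjoint V)) {a : C → α} (ha : ∀ c, a c ∈ V c) :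
    Function.Injective a :=
  fun c c' h => hV.eq (not_disjoint_iff.2 ⟨a c, ha c, h ▸ ha c'⟩)

variable [DecidableEq α] {C : Type*} [Fintype C] {V : C → Finset α}

lemma exists_eq_image_of_card_inter_eq_one {A : Finset α} (hcover : A ⊆ univ.sup V)
    (hA : ∀ c, (A ∩ V c).card = 1) :
    ∃ a : C → α, (∀ c, a c ∈ V c) ∧ A = univ.image a := by
  choose a ha using fun c => card_eq_one.1 (hA c)
  have hmem : ∀ c, a c ∈ A ∩ V c := fun c => ha c ▸ mem_singleton_self (a c)
  refine ⟨a, fun c => (mem_inter.1 (hmem c)).2, Subset.antisymm (fun v hv => ?_) ?_⟩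
  · obtain ⟨c, -, hvc⟩ := mem_sup.1 (hcover hv)
    have : v ∈ ({a c} : Finset α) := ha c ▸ mem_inter.2 ⟨hv, hvc⟩
    exact mem_image.2 ⟨c, mem_univ c, (mem_singleton.1 this).symm⟩
  · exact image_subset_iff.2 fun c _ => (mem_inter.1 (hmem c)).1

variable (hV : Pairwise (Function.onFun Disjoint V)) {a b d : C → α}
include hV

lemma mem_image_transversal_iff (ha : ∀ c, a c ∈ V c) {v : α} {c : C} (hv : v ∈ V c) :
    v ∈ univ.image a ↔ v = a c := by
  refine ⟨fun h => ?_, fun h => h ▸ mem_image_of_mem a (mem_univ c)⟩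
  obtain ⟨c', -, rfl⟩ := mem_image.1 h
  rw [hV.eq (not_disjoint_iff.2 ⟨a c', ha c', hv⟩)]

lemma image_transversal_inter (ha : ∀ c, a c ∈ V c) (c : C) : univ.image a ∩ V c = {a c} := by
  ext v
  rw [mem_inter, mem_singleton]
  exact ⟨fun h => (mem_image_transversal_iff hV ha h.2).1 h.1,
    fun h => h ▸ ⟨mem_image_of_mem a (mem_univ c), ha c⟩⟩

lemma image_transversal_inter_subset_iff (ha : ∀ c, a c ∈ V c) (hb : ∀ c, b c ∈ V c)
    (hd : ∀ c, d c ∈ V c) :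
    univ.image a ∩ univ.image b ⊆ univ.image d ↔ ∀ c, a c = b c → a c = d c := by
  have hmem : ∀ c, a c ∈ univ.image a := fun c => mem_image_of_mem a (mem_univ c)
  refine ⟨fun h c hab => ?_, fun h v hv => ?_⟩
  · exact (mem_image_transversal_iff hV hd (ha c)).1
      (h (mem_inter.2 ⟨hmem c, (mem_image_transversal_iff hV hb (ha c)).2 hab⟩))
  · obtain ⟨hva, hvb⟩ := mem_inter.1 hv
    obtain ⟨c, -, rfl⟩ := mem_image.1 hva
    exact (mem_image_transversal_iff hV hd (ha c)).2
      (h c ((mem_image_transversal_iff hV hb (ha c)).1 hvb))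

end Transversal

section TreeOrder

variable [DecidableEq α] {m : ℕ}

lemma isRTree_empty (r : ℕ) : IsRTree r (∅ : Finset (Finset α)) :=
  ⟨0, Fin.elim0, rfl, fun i => i.elim0, fun i => i.elim0⟩

lemma isTreeOrder_iff_exists_parent (E : Fin m → Finset α) :
    IsTreeOrder E ↔
      ∃ p : Fin m → Fin m, ∀ ⦃i l⦄, l < i → p i < i ∧ E i ∩ E l ⊆ E (p i) := by
  constructor
  · intro hE
    choose! p hp using hE
    refine ⟨p, fun i l hl => ?_⟩
    obtain ⟨hpi, hsub⟩ := hp i (Nat.zero_lt_of_lt hl)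
    exact ⟨hpi, (inter_subset_inter_left (le_sup (f := E) (mem_Iio.2 hl))).trans hsub⟩
  · rintro ⟨p, hp⟩ i hi
    refine ⟨p i, (hp (l := ⟨0, hi.trans i.2⟩) hi).1, fun v hv => ?_⟩
    obtain ⟨hvi, hv⟩ := mem_inter.1 hv
    obtain ⟨l, hl, hvl⟩ := mem_sup.1 hv
    exact (hp (mem_Iio.1 hl)).2 (mem_inter.2 ⟨hvi, hvl⟩)

variable {C : Type*} [Fintype C] {V : C → Finset α}

lemma IsRTree.exists_transversal_order {r : ℕ} {T : Finset (Finset α)} (hT : IsRTree r T)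
    (hcover : T.sup id ⊆ univ.sup V) (hcomp : ∀ A ∈ T, ∀ c, (A ∩ V c).card = 1) :
    ∃ (m : ℕ) (x : Fin m → C → α), (∀ i c, x i c ∈ V c) ∧
      IsTreeOrder (fun i => univ.image (x i)) ∧ T = univ.image fun i => univ.image (x i) := by
  obtain ⟨m, E, rfl, hE, -⟩ := hT
  have hET : ∀ i, E i ∈ univ.image E := fun i => mem_image_of_mem E (mem_univ i)
  choose x hxV hEx using fun i => exists_eq_image_of_card_inter_eq_one
    ((le_sup (f := id) (hET i)).trans hcover) (hcomp (E i) (hET i))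
  obtain rfl : E = fun i => univ.image (x i) := funext hEx
  exact ⟨m, x, hxV, hE, rfl⟩

variable (hV : Pairwise (Function.onFun Disjoint V)) {x : Fin m → C → α} (hx : ∀ i c, x i c ∈ V c)
include hV hx

lemma isRTree_image_transversal (hord : IsTreeOrder fun i => univ.image (x i)) :
    IsRTree (Fintype.card C) (univ.image fun i => univ.image (x i)) :=
  ⟨m, _, rfl, hord, fun i => by
    rw [card_image_of_injective _ (transversal_injective hV (hx i)), card_univ]⟩

lemma isTreeOrder_image_transversal_iff :
    IsTreeOrder (fun i => univ.image (x i)) ↔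
      ∃ p : Fin m → Fin m, (∀ ⦃i l⦄, l < i → p i < i) ∧ ∀ c, IsInherited p fun i => x i c := by
  simp only [isTreeOrder_iff_exists_parent,
    image_transversal_inter_subset_iff hV (hx _) (hx _) (hx _)]
  exact exists_congr fun p => ⟨fun h => ⟨fun i l hl => (h hl).1, fun c i l hl => (h hl).2 c⟩,
    fun h i l hl => ⟨h.1 hl, fun c => h.2 c hl⟩⟩

lemma IsTreeOrder.exists_retraction (hord : IsTreeOrder fun i => univ.image (x i)) {S : Finset α}
    (hS : ∀ c, ∃ i, x i c ∈ S) :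
    ∃ y : Fin m → C → α, IsTreeOrder (fun i => univ.image (y i)) ∧
      (∀ i c, y i c ∈ V c ∩ S) ∧ ∀ i, (∀ c, x i c ∈ S) → y i = x i := by
  obtain ⟨p, hp, hinh⟩ := (isTreeOrder_image_transversal_iff hV hx).1 hord
  choose y hy hyS hyx using fun c => IsInherited.exists_retraction (S := V c ∩ S) hp (hinh c)
    ((hS c).imp fun i hi => ⟨hx i c, hi⟩)
  exact ⟨fun i c => y c i,
    (isTreeOrder_image_transversal_iff hV fun i c => (hyS c i).1).2 ⟨p, hp, hy⟩,
    fun i c => mem_inter.2 (hyS c i),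
    fun i hi => funext fun c => hyx c i ⟨hx i c, hi c⟩⟩

lemma IsTreeOrder.exists_hosting_order (hord : IsTreeOrder fun i => univ.image (x i))
    {H : Finset (Finset α)} (hne : H.Nonempty) (hH : H ⊆ univ.image fun i => univ.image (x i)) :
    ∃ y : Fin m → C → α, IsTreeOrder (fun i => univ.image (y i)) ∧
      (∀ i c, y i c ∈ V c ∩ H.sup id) ∧ H ⊆ univ.image fun i => univ.image (y i) := by
  have hedge : ∀ A ∈ H, ∃ i, univ.image (x i) = A ∧ ∀ c, x i c ∈ H.sup id := fun A hA => by
    obtain ⟨i, -, rfl⟩ := mem_image.1 (hH hA)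
    exact ⟨i, rfl, fun c => le_sup (f := id) hA (mem_image_of_mem _ (mem_univ c))⟩
  obtain ⟨A₀, hA₀⟩ := hne
  obtain ⟨i₀, -, hi₀⟩ := hedge A₀ hA₀
  obtain ⟨y, hy, hyV, hyx⟩ := hord.exists_retraction hV hx fun c => ⟨i₀, hi₀ c⟩
  refine ⟨y, hy, hyV, fun A hA => ?_⟩
  obtain ⟨i, rfl, hi⟩ := hedge A hA
  exact mem_image.2 ⟨i, mem_univ i, congrArg (univ.image ·) (hyx i hi)⟩

end TreeOrder

/-- Smallest hosting tree: if `H` is a subgraph of an `r`-tree `T` with compatible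
`r`-partition `V 0, …, V (r-1)`, then there is an `r`-tree `G` containing `H` with
`V(G) = V(H)` for which `i ↦ V i ∩ V(H)` is a compatible `r`-partition. -/
theorem smallest_hosting_tree {α : Type*} [DecidableEq α]
    (r : ℕ) (T H : Finset (Finset α))
    (hT : IsRTree r T) (hHT : H ⊆ T)
    (V : Fin r → Finset α)
    (hdisj : ∀ i j : Fin r, i ≠ j → Disjoint (V i) (V j))
    (hcover : Finset.univ.sup V = T.sup id)
    (hcomp : ∀ A ∈ T, ∀ i : Fin r, (A ∩ V i).card = 1) :
    ∃ G : Finset (Finset α), IsRTree r G ∧ H ⊆ G ∧ G.sup id = H.sup id ∧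
      (Finset.univ.sup (fun i => V i ∩ H.sup id) = G.sup id) ∧
      ∀ A ∈ G, ∀ i : Fin r, (A ∩ (V i ∩ H.sup id)).card = 1 := by
  have hVsup : univ.sup (fun c => V c ∩ H.sup id) = H.sup id :=
    (sup_inf_distrib_right univ V (H.sup id)).symm.trans
      (inf_eq_right.2 (hcover ▸ sup_mono hHT))
  rcases H.eq_empty_or_nonempty with rfl | hne
  · exact ⟨∅, isRTree_empty r, Subset.rfl, rfl, hVsup, by simp⟩
  have hV : Pairwise (Function.onFun Disjoint V) := fun i j => hdisj i j
  have hVH : Pairwise (Function.onFun Disjoint fun c => V c ∩ H.sup id) := fun i j hij =>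
    (hV hij).mono inter_subset_left inter_subset_left
  obtain ⟨m, x, hxV, hx, rfl⟩ := hT.exists_transversal_order hcover.ge hcomp
  obtain ⟨y, hy, hyV, hHG⟩ := hx.exists_hosting_order hV hxV hne hHT
  have hsup : (univ.image fun i => univ.image (y i)).sup id = H.sup id :=
    le_antisymm (Finset.sup_le <| forall_mem_image.2 fun i _ =>
      image_subset_iff.2 fun c _ => (mem_inter.1 (hyV i c)).2) (sup_mono hHG)
  refine ⟨_, by simpa only [Fintype.card_fin] using isRTree_image_transversal hVH hyV hy, hHG, hsup,
    hVsup.trans hsup.symm, forall_mem_image.2 fun i _ c => ?_⟩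
  rw [image_transversal_inter hVH (hyV i), card_singleton]

end
end

section
/- (The trace of a tree) Let G be a hypergraph tree and S ⊆ V(G). Then the trace G|_S, whose edges are the sets E ∩ S for E an edge of G, and G − S = G|_{V(G)∖S}, whose edges are the sets E ∖ S for E an edge of G, are both hypergraph trees. -/
open Finset
open scoped Classical

noncomputable section

variable {α β : Type*}

theorem IsTreeOrder.filter [DecidableEq α] {m : ℕ} {E : Fin m → Finset α}
    (hE : IsTreeOrder E) (p : α → Prop) [DecidablePred p] :
    IsTreeOrder fun j => (E j).filter p := by
  intro i hi
  obtain ⟨j, hji, hparent⟩ := hE i hi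
  refine ⟨j, hji, ?_⟩
  calc (E i).filter p ∩ (Iio i).sup (fun k => (E k).filter p)
      ⊆ (E i).filter p ∩ (Iio i).sup E :=
        inter_subset_inter_left (sup_mono_fun fun k _ => filter_subset p (E k))
    _ = (E i ∩ (Iio i).sup E).filter p := filter_inter p _ _
    _ ⊆ (E j).filter p := filter_subset_filter p hparent

/-- The trace of a tree: for a tree-defining ordering `E` and any vertex set `S`, both
the trace `j ↦ E j ∩ S` and the deletion `j ↦ E j ∖ S` are tree-defining orderings. -/
theorem trace_of_tree {α : Type*} [DecidableEq α]
    (m : ℕ) (E : Fin m → Finset α) (hord : IsTreeOrder E) (S : Finset α) :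
    IsTreeOrder (fun j => E j ∩ S) ∧ IsTreeOrder (fun j => E j \ S) := by
  constructor
  · simpa only [filter_mem_eq_inter] using hord.filter (· ∈ S)
  · simpa only [sdiff_eq_filter] using hord.filter (· ∉ S)

end
end

section
/- (Missing edges versus non-M edges) Let M be an r-graph with m edges, m ≥ 2, on v vertices, and let n ≥ v. Let G be an r-graph on [n], let G̅ be its complement (the r-subsets of [n] that are not edges of G), and let G_0 be the set of edges of G that do not lie in any copy of M inside G. Then |G_0| ≤ (m−1)·|G̅|. -/
/-!
Place a copy of `M` on the vertex set and move it around by all permutations. If a moved copy uses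
an edge of `G` that lies in no copy of `M` inside `G`, then it is not contained in `G`; so it uses
at least one missing edge and at most `m - 1` edges of `G₀`. Hence in every moved copy the edges of
`G₀` are at most `m - 1` times as many as the missing ones. Since the symmetric group is transitive
on `r`-sets, every `r`-set is hit by equally many moved copies, and averaging over all permutations
gives the same inequality between `|G₀|` and the number of all missing edges.
-/

open Finset
open scoped Classical

noncomputable section

variable {α β : Type*}

open scoped Pointwise

section OrbitAveraging

open MulAction

variable {Γ X : Type*} [Group Γ] [MulAction Γ X] [DecidableEq X]

theorem card_filter_smul_mem_smul_finset [Fintype Γ] (h : Γ) (P : Finset X) (x : X) :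
    #{g : Γ | h • x ∈ g • P} = #{g : Γ | x ∈ g • P} := by
  refine (card_equiv (Equiv.mulLeft h) fun g => ?_).symm
  simp only [mem_filter_univ, Equiv.coe_mulLeft, mul_smul, smul_mem_smul_finset_iff]

theorem sum_card_smul_inter_of_subset_orbit [Fintype Γ] {A : Finset X} {x : X}
    (hA : ↑A ⊆ orbit Γ x) (P : Finset X) : ∑ g : Γ, #(g • P ∩ A) = #A * #{g : Γ | x ∈ g • P} := by
  calc ∑ g : Γ, #(g • P ∩ A)
      = ∑ g : Γ, #{a ∈ A | a ∈ g • P} := by simp only [inter_comm, filter_mem_eq_inter]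
    _ = ∑ a ∈ A, #{g : Γ | a ∈ g • P} :=
        sum_card_bipartiteAbove_eq_sum_card_bipartiteBelow fun (g : Γ) a => a ∈ g • P
    _ = #A * #{g : Γ | x ∈ g • P} := sum_const_nat fun a ha => by
        obtain ⟨h, rfl⟩ := hA ha
        exact card_filter_smul_mem_smul_finset h P x

theorem card_le_mul_card_of_forall_card_smul_inter_le [Finite Γ] {P A B : Finset X} {p : X}
    (hp : p ∈ P) (hA : ↑A ⊆ orbit Γ p) (hB : ↑B ⊆ orbit Γ p) {k : ℕ}
    (hAB : ∀ g : Γ, #(g • P ∩ A) ≤ k * #(g • P ∩ B)) : #A ≤ k * #B := by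
  cases nonempty_fintype Γ
  have hits_pos : 0 < #{g : Γ | p ∈ g • P} :=
    card_pos.2 ⟨1, by rwa [mem_filter_univ, one_smul]⟩
  refine Nat.le_of_mul_le_mul_right ?_ hits_pos
  calc #A * #{g : Γ | p ∈ g • P}
      = ∑ g : Γ, #(g • P ∩ A) := (sum_card_smul_inter_of_subset_orbit hA P).symm
    _ ≤ ∑ g : Γ, k * #(g • P ∩ B) := sum_le_sum fun g _ => hAB g
    _ = k * #B * #{g : Γ | p ∈ g • P} := by
        rw [← mul_sum, sum_card_smul_inter_of_subset_orbit hB, mul_assoc]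

end OrbitAveraging

theorem mem_orbit_perm_of_card_eq {V : Type*} [DecidableEq V] {s t : Finset V} (h : #t = #s) :
    t ∈ MulAction.orbit (Equiv.Perm V) s := by
  have := Set.powersetCard.isPretransitive (α := V) (n := #s)
  obtain ⟨σ, hσ⟩ := MulAction.exists_smul_eq (Equiv.Perm V)
    (⟨s, rfl⟩ : Set.powersetCard V #s) ⟨t, h⟩
  exact ⟨σ, congrArg Subtype.val hσ⟩

section Copies

variable {V : Type*} [DecidableEq α] [DecidableEq V]
  {r : ℕ} {M : Finset (Finset α)} {P G : Finset (Finset V)}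

/-- `P` is a copy of `M`: the image of `M` under a map of vertices which is injective on the
vertices covered by `M`. The map is total on `α` to avoid subtypes; its values off the vertices
of `M` are irrelevant. -/
def IsCopy (M : Finset (Finset α)) (P : Finset (Finset V)) : Prop :=
  ∃ f : α → V, Set.InjOn f ↑(M.sup id) ∧ M.image (Finset.image f) = P

theorem exists_isCopy [Fintype V] (hM : (M.sup id).Nonempty)
    (hV : #(M.sup id) ≤ Fintype.card V) : ∃ P : Finset (Finset V), IsCopy M P := by
  have : Nonempty V := Fintype.card_pos_iff.1 (hM.card_pos.trans_le hV)
  obtain ⟨f, -, hf⟩ := (M.sup id).finite_toSet.exists_injOn_of_encard_le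
    (t := (Set.univ : Set V)) (by simpa using hV)
  exact ⟨_, f, hf, rfl⟩

namespace IsCopy

theorem smul (hP : IsCopy M P) (σ : Equiv.Perm V) : IsCopy M (σ • P) := by
  obtain ⟨f, hf, rfl⟩ := hP
  refine ⟨σ ∘ f, σ.injective.comp_injOn hf, ?_⟩
  simp only [smul_finset_def, image_image, Function.comp_def, Equiv.Perm.smul_def]

theorem nonempty (hP : IsCopy M P) (hM : M.Nonempty) : P.Nonempty := by
  obtain ⟨f, -, rfl⟩ := hP
  exact hM.image _

theorem card_le (hP : IsCopy M P) : #P ≤ #M := by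
  obtain ⟨f, -, rfl⟩ := hP
  exact card_image_le

theorem sized (hP : IsCopy M P) (hM : (M : Set (Finset α)).Sized r) :
    (P : Set (Finset V)).Sized r := by
  obtain ⟨f, hf, rfl⟩ := hP
  intro e he
  obtain ⟨A, hA, rfl⟩ := mem_image.1 he
  have hA_sub : A ⊆ M.sup id := le_sup (f := id) hA
  rw [card_image_of_injOn (hf.mono (coe_subset.2 hA_sub)), hM hA]

end IsCopy

/-- The edges of `G` that lie in no copy of `M` inside `G`, written `G₀` in the informal
statement. -/
def edgesInNoCopy (M : Finset (Finset α)) (G : Finset (Finset V)) : Finset (Finset V) :=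
  G.filter fun e => ¬ ∃ P, IsCopy M P ∧ P ⊆ G ∧ e ∈ P

/-- The `r`-subsets of the vertex set that are not edges of `G`, i.e. the edges of the complement
of the `r`-graph `G`. -/
def missingEdges [Fintype V] (r : ℕ) (G : Finset (Finset V)) : Finset (Finset V) :=
  univ.filter fun e => #e = r ∧ e ∉ G

theorem mem_edgesInNoCopy {e : Finset V} :
    e ∈ edgesInNoCopy M G ↔ e ∈ G ∧ ¬ ∃ P, IsCopy M P ∧ P ⊆ G ∧ e ∈ P :=
  mem_filter

theorem mem_missingEdges [Fintype V] {e : Finset V} :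
    e ∈ missingEdges r G ↔ #e = r ∧ e ∉ G :=
  mem_filter_univ e

theorem exists_isCopy_subset_mem_iff {e : Finset V} :
    (∃ P, IsCopy M P ∧ P ⊆ G ∧ e ∈ P) ↔
      ∃ f : α → V, Set.InjOn f ↑(M.sup id) ∧ (∀ A ∈ M, A.image f ∈ G) ∧
        ∃ A ∈ M, A.image f = e := by
  constructor
  · rintro ⟨_, ⟨f, hf, rfl⟩, hG, he⟩
    exact ⟨f, hf, image_subset_iff.1 hG, mem_image.1 he⟩
  · rintro ⟨f, hf, hG, he⟩
    exact ⟨_, ⟨f, hf, rfl⟩, image_subset_iff.2 hG, mem_image.2 he⟩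

theorem IsCopy.card_inter_edgesInNoCopy_le [Fintype V] (hP : IsCopy M P)
    (hM : (M : Set (Finset α)).Sized r) :
    #(P ∩ edgesInNoCopy M G) ≤ (#M - 1) * #(P ∩ missingEdges r G) := by
  obtain hempty | ⟨e, he⟩ := (P ∩ edgesInNoCopy M G).eq_empty_or_nonempty
  · simp only [hempty, card_empty, zero_le]
  obtain ⟨heP, heG₀⟩ := mem_inter.1 he
  have hPG : ¬ P ⊆ G := fun hPG => (mem_edgesInNoCopy.1 heG₀).2 ⟨P, hP, hPG, heP⟩
  obtain ⟨b, hbP, hbG⟩ := not_subset.1 hPG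
  have missing_pos : 0 < #(P ∩ missingEdges r G) :=
    card_pos.2 ⟨b, mem_inter.2 ⟨hbP, mem_missingEdges.2 ⟨hP.sized hM hbP, hbG⟩⟩⟩
  have hsub : P ∩ edgesInNoCopy M G ⊆ P.erase b := by
    rw [← sdiff_singleton_eq_erase, subset_sdiff, disjoint_singleton_right]
    exact ⟨inter_subset_left, fun hb => hbG (mem_edgesInNoCopy.1 (mem_inter.1 hb).2).1⟩
  calc #(P ∩ edgesInNoCopy M G)
      ≤ #(P.erase b) := card_le_card hsub
    _ = #P - 1 := card_erase_of_mem hbP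
    _ ≤ #M - 1 := Nat.sub_le_sub_right hP.card_le 1
    _ ≤ (#M - 1) * #(P ∩ missingEdges r G) := Nat.le_mul_of_pos_right _ missing_pos

theorem sup_id_nonempty_of_one_lt_card (hM : 1 < #M) : (M.sup id).Nonempty := by
  obtain ⟨A, hA, hA_ne⟩ := exists_mem_ne hM ∅
  exact (nonempty_iff_ne_empty.2 hA_ne).mono (le_sup (f := id) hA)

theorem missing_vs_nonM_edges_general [Fintype V] (hM : (M : Set (Finset α)).Sized r)
    (hM_verts : (M.sup id).Nonempty) (hV : #(M.sup id) ≤ Fintype.card V)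
    (hG : (G : Set (Finset V)).Sized r) :
    #(edgesInNoCopy M G) ≤ (#M - 1) * #(missingEdges r G) := by
  have hM_ne : M.Nonempty := by
    rw [nonempty_iff_ne_empty]
    rintro rfl
    exact Finset.not_nonempty_empty hM_verts
  obtain ⟨P, hP⟩ := exists_isCopy (V := V) hM_verts hV
  obtain ⟨p, hp⟩ := hP.nonempty hM_ne
  have hp_card : #p = r := hP.sized hM hp
  refine card_le_mul_card_of_forall_card_smul_inter_le (Γ := Equiv.Perm V) hp ?_ ?_
    fun σ => (hP.smul σ).card_inter_edgesInNoCopy_le hM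
  · exact fun e he => mem_orbit_perm_of_card_eq ((hG (mem_edgesInNoCopy.1 he).1).trans hp_card.symm)
  · exact fun e he => mem_orbit_perm_of_card_eq ((mem_missingEdges.1 he).1.trans hp_card.symm)

end Copies

/-- Missing edges versus non-`M` edges: if `M` is an `r`-graph with `m ≥ 2` edges on `v`
vertices, `n ≥ v`, and `G` is an `r`-graph on `[n]`, then the number of edges of `G`
lying in no copy of `M` inside `G` is at most `(m-1)` times the number of `r`-subsets of
`[n]` not in `G`. -/
theorem missing_vs_nonM_edges {α : Type*} [DecidableEq α]
    (r m v n : ℕ) (hm : 2 ≤ m)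
    (M : Finset (Finset α)) (hMr : ∀ A ∈ M, A.card = r) (hMm : M.card = m)
    (hv : (M.sup id).card = v) (hn : v ≤ n)
    (G : Finset (Finset (Fin n))) (hG : ∀ A ∈ G, A.card = r) :
    (G.filter (fun e => ¬ ∃ f : α → Fin n, Set.InjOn f ↑(M.sup id) ∧
        (∀ A ∈ M, A.image f ∈ G) ∧ ∃ A ∈ M, A.image f = e)).card
      ≤ (m - 1) *
        (Finset.univ.filter (fun A : Finset (Fin n) => A.card = r ∧ A ∉ G)).card := by
  subst hMm hv
  refine (congrArg card (Finset.ext fun e => ?_)).trans_le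
    (missing_vs_nonM_edges_general hMr (sup_id_nonempty_of_one_lt_card hm) (by simpa using hn) hG)
  rw [mem_filter, mem_edgesInNoCopy, exists_isCopy_subset_mem_iff]

end
end
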